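/- arXiv:1401.1044 — 4 statements merged into one kernel-verified Lean document; each statement's English description precedes it below -/
import Mathlib

section
/- Let C be a model category and f, g : X → Y two morphisms of C which are homotopic. Then the images of f and g under the localization functor l : C → Ho(C) are equal, where Ho(C) = W⁻¹C is the localization of C at the class W of weak equivalences. -/
open CategoryTheory CategoryTheory.Limits

universe v v' u u'

/-- `f` is a retract of `g`: there are morphisms `i, r, j, s` exhibiting the arrow `f`
as a retract of the arrow `g` in the arrow category. -/
def IsRetractOf {C : Type u} [Category.{v} C] {X Y X' Y' : C}
    (f : X ⟶ Y) (g : X' ⟶ Y') : Prop :=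
  ∃ (i : X ⟶ X') (r : X' ⟶ X) (j : Y ⟶ Y') (s : Y' ⟶ Y),
    i ≫ r = 𝟙 X ∧ j ≫ s = 𝟙 Y ∧ i ≫ g = f ≫ j ∧ g ≫ s = r ≫ f

/-- A model category structure (in the sense of Quillen) on a category `C`:
weak equivalences `W`, fibrations `Fib` and cofibrations `Cof`, satisfying
two-out-of-three, stability under composition and retracts, the lifting axioms,
and the factorization axioms. (The category `C` is moreover assumed to be complete
and cocomplete, via the `HasLimits`/`HasColimits` instances in the statements.) -/
structure ModelStructure (C : Type u) [Category.{v} C] where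
  W : MorphismProperty C
  Fib : MorphismProperty C
  Cof : MorphismProperty C
  /-- two-out-of-three, part 1 -/
  W_comp : ∀ {X Y Z : C} (f : X ⟶ Y) (g : Y ⟶ Z), W f → W g → W (f ≫ g)
  /-- two-out-of-three, part 2 -/
  W_of_comp_right : ∀ {X Y Z : C} (f : X ⟶ Y) (g : Y ⟶ Z), W (f ≫ g) → W g → W f
  /-- two-out-of-three, part 3 -/
  W_of_comp_left : ∀ {X Y Z : C} (f : X ⟶ Y) (g : Y ⟶ Z), W (f ≫ g) → W f → W g
  Fib_comp : ∀ {X Y Z : C} (f : X ⟶ Y) (g : Y ⟶ Z), Fib f → Fib g → Fib (f ≫ g)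
  Cof_comp : ∀ {X Y Z : C} (f : X ⟶ Y) (g : Y ⟶ Z), Cof f → Cof g → Cof (f ≫ g)
  W_retract : ∀ {X Y X' Y' : C} (f : X ⟶ Y) (g : X' ⟶ Y'), IsRetractOf f g → W g → W f
  Fib_retract : ∀ {X Y X' Y' : C} (f : X ⟶ Y) (g : X' ⟶ Y'), IsRetractOf f g → Fib g → Fib f
  Cof_retract : ∀ {X Y X' Y' : C} (f : X ⟶ Y) (g : X' ⟶ Y'), IsRetractOf f g → Cof g → Cof f
  /-- lifting axiom: cofibrations have the left lifting property against trivial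
  fibrations and trivial cofibrations against fibrations -/
  lifting : ∀ {A B X Y : C} (i : A ⟶ B) (p : X ⟶ Y), Cof i → Fib p → (W i ∨ W p) →
    ∀ (f : A ⟶ X) (g : B ⟶ Y), f ≫ p = i ≫ g → ∃ h : B ⟶ X, i ≫ h = f ∧ h ≫ p = g
  /-- factorization as a trivial cofibration followed by a fibration -/
  factorization_trivCof_fib : ∀ {X Y : C} (f : X ⟶ Y), ∃ (Z : C) (i : X ⟶ Z) (p : Z ⟶ Y),
    Cof i ∧ W i ∧ Fib p ∧ i ≫ p = f
  /-- factorization as a cofibration followed by a trivial fibration -/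
  factorization_cof_trivFib : ∀ {X Y : C} (f : X ⟶ Y), ∃ (Z : C) (i : X ⟶ Z) (p : Z ⟶ Y),
    Cof i ∧ Fib p ∧ W p ∧ i ≫ p = f

namespace ModelStructure

variable {C : Type u} [Category.{v} C]

/-- An object `X` is cofibrant if `∅ ⟶ X` is a cofibration. -/
def Cofibrant [HasColimits C] (M : ModelStructure C) (X : C) : Prop :=
  M.Cof (initial.to X)

/-- An object `X` is fibrant if `X ⟶ *` is a fibration. -/
def Fibrant [HasLimits C] (M : ModelStructure C) (X : C) : Prop :=
  M.Fib (terminal.from X)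

/-- Two morphisms `f g : X ⟶ Y` are homotopic if there is a cylinder-like object `CX`
with `i j : X ⟶ CX`, a trivial fibration `p : CX ⟶ X` with `i ≫ p = j ≫ p = 𝟙 X`, such that
the induced morphism `X ⨿ X ⟶ CX` is a cofibration, together with `h : CX ⟶ Y` with
`i ≫ h = f` and `j ≫ h = g`. -/
def Homotopic [HasColimits C] (M : ModelStructure C) {X Y : C} (f g : X ⟶ Y) : Prop :=
  ∃ (CX : C) (i j : X ⟶ CX) (p : CX ⟶ X) (h : CX ⟶ Y),
    M.Fib p ∧ M.W p ∧ i ≫ p = 𝟙 X ∧ j ≫ p = 𝟙 X ∧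
    M.Cof (coprod.desc i j) ∧ i ≫ h = f ∧ j ≫ h = g

end ModelStructure

/-- Let `C` be a model category and `f, g : X ⟶ Y` two homotopic morphisms
of `C`. Then the images of `f` and `g` under the localization functor
`l : C ⥤ Ho(C) = W⁻¹C` are equal. -/
theorem statement1 {C : Type u} [Category.{v} C] [HasLimits C] [HasColimits C]
    (M : ModelStructure C) {X Y : C} (f g : X ⟶ Y) (h : M.Homotopic f g) :
    M.W.Q.map f = M.W.Q.map g := by
  obtain ⟨CX, i, j, p, k, _, hW, hi, hj, _, rfl, rfl⟩ := h
  have : IsIso (M.W.Q.map p) := M.W.Q_inverts p hW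
  have e : M.W.Q.map i = M.W.Q.map j := by
    rw [← cancel_mono (M.W.Q.map p), ← Functor.map_comp, ← Functor.map_comp, hi, hj]
  rw [Functor.map_comp, Functor.map_comp, e]
end

section
/- Let C be a model category, X a cofibrant object and Y a fibrant object of C. Then the localization functor l : C → Ho(C) induces a bijection from the quotient Hom_C(X, Y)/~ of the set of morphisms from X to Y by the homotopy relation onto the set Hom_{Ho(C)}(l(X), l(Y)) of morphisms in the homotopy category. -/
open CategoryTheory CategoryTheory.Limits

universe v v' u u'

open HomotopicalAlgebra in
/-- The Mathlib model category attached to a `ModelStructure`. -/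
@[reducible]
def ModelStructure.toModelCategory {C : Type u} [Category.{v} C] [HasLimits C] [HasColimits C]
    (M : ModelStructure C) : ModelCategory C :=
  have retr : ∀ {X Y X' Y' : C} {f : X ⟶ Y} {g : X' ⟶ Y'}, RetractArrow f g →
      IsRetractOf f g := fun h =>
    ⟨h.i.left, h.r.left, h.i.right, h.r.right, h.retract_left, h.retract_right,
      h.i_w, h.r_w.symm⟩
  { categoryWithFibrations := ⟨M.Fib⟩
    categoryWithCofibrations := ⟨M.Cof⟩
    categoryWithWeakEquivalences := ⟨M.W⟩
    cm1a := inferInstance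
    cm1b := inferInstance
    cm2 :=
      { comp_mem := fun f g hf hg => M.W_comp f g hf hg
        of_postcomp := fun f g hg hfg => M.W_of_comp_right f g hfg hg
        of_precomp := fun f g hf hfg => M.W_of_comp_left f g hfg hf }
    cm3a := ⟨fun h hg => M.W_retract _ _ (retr h) hg⟩
    cm3b := ⟨fun h hg => M.Fib_retract _ _ (retr h) hg⟩
    cm3c := ⟨fun h hg => M.Cof_retract _ _ (retr h) hg⟩
    cm4a := fun i p hi hi' hp => ⟨fun {f g} sq => by
      obtain ⟨h, h1, h2⟩ := M.lifting i p hi.mem hp.mem (Or.inl hi'.mem) f g sq.w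
      exact ⟨⟨⟨h, h1, h2⟩⟩⟩⟩
    cm4b := fun i p hi hp hp' => ⟨fun {f g} sq => by
      obtain ⟨h, h1, h2⟩ := M.lifting i p hi.mem hp.mem (Or.inr hp'.mem) f g sq.w
      exact ⟨⟨⟨h, h1, h2⟩⟩⟩⟩
    cm5a := ⟨fun f => by
      obtain ⟨Z, i, p, h1, h2, h3, h4⟩ := M.factorization_trivCof_fib f
      exact ⟨⟨Z, i, p, h4, ⟨h1, h2⟩, h3⟩⟩⟩
    cm5b := ⟨fun f => by
      obtain ⟨Z, i, p, h1, h2, h3, h4⟩ := M.factorization_cof_trivFib f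
      exact ⟨⟨Z, i, p, h4, h1, ⟨h2, h3⟩⟩⟩⟩ }

/-- Let `C` be a model category, `X` a cofibrant object and `Y` a fibrant
object of `C`. Then the localization functor `l : C ⥤ Ho(C)` induces a bijection
`Hom_C(X, Y)/∼ ≃ Hom_{Ho(C)}(l(X), l(Y))`; equivalently, the map
`f ↦ l(f)` is surjective onto `Hom_{Ho(C)}(l(X), l(Y))` and two morphisms have the same
image if and only if they are homotopic. -/
theorem statement2 {C : Type u} [Category.{v} C] [HasLimits C] [HasColimits C]
    (M : ModelStructure C) (X Y : C) (hX : M.Cofibrant X) (hY : M.Fibrant Y) :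
    Function.Surjective (fun f : X ⟶ Y => M.W.Q.map f) ∧
    ∀ f g : X ⟶ Y, M.W.Q.map f = M.W.Q.map g ↔ M.Homotopic f g := by
  let _ := M.toModelCategory
  have : HomotopicalAlgebra.IsCofibrant X := ⟨hX⟩
  have : HomotopicalAlgebra.IsFibrant Y := ⟨hY⟩
  have : M.W.Q.IsLocalization (HomotopicalAlgebra.weakEquivalences C) :=
    inferInstanceAs (M.W.Q.IsLocalization M.W)
  refine ⟨HomotopicalAlgebra.map_surjective_of_isLocalization M.W.Q X Y, fun f g => ?_⟩
  rw [← HomotopicalAlgebra.LeftHomotopyRel.iff_map_eq M.W.Q X Y]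
  constructor
  · intro h
    obtain ⟨P, hP⟩ := HomotopicalAlgebra.Cylinder.exists_very_good X
    have H := h.leftHomotopy P
    exact ⟨P.I, P.i₀, P.i₁, P.π, H.h, hP.fibration_π.mem, P.weakEquivalence_π.mem,
      P.i₀_π, P.i₁_π, hP.cofibration_i.mem, H.h₀, H.h₁⟩
  · rintro ⟨CX, i, j, p, h, -, hp, hi, hj, -, h0, h1⟩
    exact ⟨{ I := CX, i₀ := i, i₁ := j, π := p, i₀_π := hi, i₁_π := hj,
             weakEquivalence_π := ⟨hp⟩ }, ⟨{ h := h, h₀ := h0, h₁ := h1 }⟩⟩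
end

section
/- Let A be a commutative ring and f₁, …, f_r ∈ A a regular sequence generating the ideal I = (f₁, …, f_r). Then for every n ≥ 0 there is an isomorphism of A/I-modules Tor_n^A(A/I, A/I) ≅ ⋀ⁿ_{A/I}(I/I²), the n-th exterior power over A/I of the conormal module I/I². In particular Tor_n^A(A/I, A/I) = 0 for n > r. -/
open CategoryTheory

universe u

/-- Minimal free resolution data (Koszul) for `A ⧸ J`. -/
structure KRes (A : Type u) [CommRing A] (J : Ideal A) (r : ℕ) where
  X : ℕ → ModuleCat.{u} A
  b : ∀ n, Module.Basis (Fin (r.choose n)) A (X n)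
  d : ∀ n, X (n + 1) →ₗ[A] X n
  e : X 0 ≃ₗ[A] A
  mem_iff : ∀ x : X 0, e x ∈ J ↔ ∃ y, d 0 y = x
  dd : ∀ n x, d n (d (n + 1) x) = 0
  ex : ∀ n x, d n x = 0 → ∃ y, d (n + 1) y = x
  min : ∀ n x, d n x ∈ J • (⊤ : Submodule A (X n))

namespace KRes

variable {A : Type u} [CommRing A]

/-- The resolution for the empty sequence. -/
noncomputable def nil : KRes A ⊥ 0 where
  X := fun n => match n with
    | 0 => ModuleCat.of A A
    | _ + 1 => ModuleCat.of A PUnit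
  b := fun n => match n with
    | 0 => (Module.Basis.singleton (Fin 1) A)
    | n + 1 => ((Module.Basis.empty PUnit.{u+1} : Module.Basis (Fin 0) A PUnit.{u+1}))
  d := fun n => 0
  e := LinearEquiv.refl A A
  mem_iff := fun x => by
    constructor
    · intro h
      exact ⟨0, ((Submodule.mem_bot A).1 h).symm⟩
    · rintro ⟨y, rfl⟩
      exact Submodule.zero_mem _
  dd := fun n x => rfl
  ex := fun n x _ => ⟨0, rfl⟩
  min := fun n x => Submodule.zero_mem _

variable {J : Ideal A} {r : ℕ}

/-- terms of the cone -/
noncomputable def consX (K : KRes A J r) : ℕ → ModuleCat.{u} A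
  | 0 => K.X 0
  | n + 1 => ModuleCat.of A (K.X (n + 1) × K.X n)

/-- differential of the cone -/
noncomputable def consD (K : KRes A J r) (f : A) : ∀ n, K.consX (n + 1) →ₗ[A] K.consX n
  | 0 => (LinearMap.coprod (K.d 0) (f • LinearMap.id) : (K.X 1 × K.X 0) →ₗ[A] K.X 0)
  | n + 1 => (LinearMap.prod (LinearMap.coprod (K.d (n + 1)) (f • LinearMap.id))
      (-(K.d n ∘ₗ LinearMap.snd A _ _)) :
        (K.X (n + 2) × K.X (n + 1)) →ₗ[A] (K.X (n + 1) × K.X n))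

lemma consD_zero (K : KRes A J r) (f : A) (x : K.X 1) (y : K.X 0) :
    K.consD f 0 ((x, y) : K.X 1 × K.X 0) = (K.d 0 x + f • y : K.X 0) := rfl

lemma consD_succ (K : KRes A J r) (f : A) (n : ℕ) (x : K.X (n + 2)) (y : K.X (n + 1)) :
    K.consD f (n + 1) ((x, y) : K.X (n + 2) × K.X (n + 1)) =
      ((K.d (n + 1) x + f • y, - K.d n y) : K.X (n + 1) × K.X n) := rfl

/-- basis of the cone -/
noncomputable def consB (K : KRes A J r) : ∀ n, Module.Basis (Fin ((r + 1).choose n)) A (K.consX n)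
  | 0 => (K.b 0).reindex (finCongr (by simp))
  | n + 1 => (((K.b (n + 1)).prod (K.b n)).reindex
      (finSumFinEquiv.trans (finCongr (by rw [Nat.choose_succ_succ, add_comm]))) :
        Module.Basis _ A (K.X (n + 1) × K.X n))

lemma mem_prod {M N : Type u} [AddCommGroup M] [Module A M] [AddCommGroup N] [Module A N]
    (J' : Ideal A) {x : M} {y : N} (hx : x ∈ J' • (⊤ : Submodule A M))
    (hy : y ∈ J' • (⊤ : Submodule A N)) :
    (x, y) ∈ J' • (⊤ : Submodule A (M × N)) := by
  have h1 : LinearMap.inl A M N x ∈ J' • (⊤ : Submodule A (M × N)) := by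
    have := Submodule.mem_map_of_mem (f := LinearMap.inl A M N) hx
    rw [Submodule.map_smul''] at this
    exact Submodule.smul_mono le_rfl le_top this
  have h2 : LinearMap.inr A M N y ∈ J' • (⊤ : Submodule A (M × N)) := by
    have := Submodule.mem_map_of_mem (f := LinearMap.inr A M N) hy
    rw [Submodule.map_smul''] at this
    exact Submodule.smul_mono le_rfl le_top this
  simpa using Submodule.add_mem _ h1 h2

/-- Add one regular element. -/
noncomputable def cons (K : KRes A J r) (f : A) (hf : ∀ a, f * a ∈ J → a ∈ J) :
    KRes A (J ⊔ Ideal.span {f}) (r + 1) where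
  X := K.consX
  b := K.consB
  d := K.consD f
  e := K.e
  mem_iff := fun x => by
    constructor
    · intro h
      obtain ⟨j, hj, z, hz, h⟩ := Submodule.mem_sup.1 h
      obtain ⟨a, rfl⟩ := Ideal.mem_span_singleton'.1 hz
      obtain ⟨y, hy⟩ := (K.mem_iff (K.e.symm j)).1 (by simpa using hj)
      refine ⟨((y, K.e.symm a) : K.X 1 × K.X 0), ?_⟩
      rw [consD_zero, hy]
      apply K.e.injective
      rw [map_add, map_smul, LinearEquiv.apply_symm_apply, LinearEquiv.apply_symm_apply,
        smul_eq_mul, mul_comm]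
      exact h
    · rintro ⟨⟨y, z⟩, rfl⟩
      rw [consD_zero]
      refine (map_add K.e _ _).symm ▸ ?_
      refine Submodule.add_mem _ (Submodule.mem_sup_left ((K.mem_iff _).2 ⟨y, rfl⟩)) ?_
      refine Submodule.mem_sup_right ?_
      rw [map_smul, smul_eq_mul]
      exact Ideal.mul_mem_right _ _ (Ideal.mem_span_singleton_self f)
  dd := fun n x => by
    obtain ⟨x, y⟩ := x
    rw [consD_succ]
    cases n with
    | zero =>
      rw [consD_zero, map_add, K.dd, map_smul, smul_neg, zero_add, add_neg_cancel]
      rfl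
    | succ n =>
      rw [consD_succ, map_add, K.dd, map_smul, smul_neg, zero_add, add_neg_cancel, map_neg, K.dd,
        neg_zero, neg_zero]
      rfl
  ex := fun n x hx => by
    obtain ⟨x, y⟩ := x
    have key : ∀ (c : K.X (n + 1)), K.d n c = y → K.d n x + f • y = 0 →
        ∃ w, K.consD f (n + 1) w = ((x, y) : K.X (n + 1) × K.X n) := by
      intro c hc hxy
      obtain ⟨e, he⟩ := K.ex n (x + f • c) (by rw [map_add, map_smul, hc, hxy])
      refine ⟨((e, -c) : K.X (n + 2) × K.X (n + 1)), ?_⟩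
      rw [consD_succ, he, smul_neg, map_neg, hc, neg_neg, add_neg_cancel_right]
    cases n with
    | zero =>
      rw [consD_zero] at hx
      have h1 : K.e (f • y) ∈ J := by
        have : f • y = K.d 0 (-x) := by
          rw [map_neg]; exact eq_neg_of_add_eq_zero_right hx
        exact (K.mem_iff _).2 ⟨-x, this.symm⟩
      rw [map_smul, smul_eq_mul] at h1
      obtain ⟨c, hc⟩ := (K.mem_iff _).1 (hf _ h1)
      exact key c hc hx
    | succ n =>
      rw [consD_succ] at hx
      have h1 := congrArg (Prod.fst : K.X (n + 1) × K.X n → _) hx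
      have h2 := congrArg (Prod.snd : K.X (n + 1) × K.X n → _) hx
      obtain ⟨c, hc⟩ := K.ex n y (neg_eq_zero.1 h2)
      exact key c hc h1
  min := fun n x => by
    obtain ⟨x, y⟩ := x
    have hfm : f ∈ J ⊔ Ideal.span {f} :=
      Submodule.mem_sup_right (Ideal.mem_span_singleton_self f)
    have hle : ∀ n z, K.d n z ∈ (J ⊔ Ideal.span {f}) • (⊤ : Submodule A (K.X n)) := fun n z =>
      Submodule.smul_mono_left le_sup_left (K.min n z)
    cases n with
    | zero =>
      rw [consD_zero]
      exact Submodule.add_mem _ (hle _ _) (Submodule.smul_mem_smul hfm trivial)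
    | succ n =>
      rw [consD_succ]
      exact mem_prod _ (Submodule.add_mem _ (hle _ _) (Submodule.smul_mem_smul hfm trivial))
        (Submodule.neg_mem _ (hle _ _))

lemma exists_of_regular (rs : List A) (h : RingTheory.Sequence.IsWeaklyRegular A rs) :
    Nonempty (KRes A (Ideal.ofList rs) rs.length) := by
  induction rs using List.reverseRecOn with
  | nil =>
    rw [Ideal.ofList_nil]
    exact ⟨nil⟩
  | append_singleton rs f ih =>
    rw [RingTheory.Sequence.isWeaklyRegular_append_iff,
      RingTheory.Sequence.isWeaklyRegular_singleton_iff] at h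
    obtain ⟨K⟩ := ih h.1
    rw [Ideal.ofList_append, Ideal.ofList_singleton, List.length_append]
    refine ⟨K.cons f fun a ha => ?_⟩
    have := h.2
    rw [isSMulRegular_iff_right_eq_zero_of_smul] at this
    have h2 := this (Submodule.Quotient.mk a) (by
      rw [← Submodule.Quotient.mk_smul, Submodule.Quotient.mk_eq_zero]
      simpa using ha)
    rw [Submodule.Quotient.mk_eq_zero] at h2
    simpa using h2

end KRes

section Tor

variable {A : Type u} [CommRing A] {I : Ideal A} {r : ℕ}

namespace KRes

/-- The underlying chain complex. -/
noncomputable def cpx (K : KRes A I r) : ChainComplex (ModuleCat.{u} A) ℕ :=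
  ChainComplex.of K.X (fun n => ModuleCat.ofHom (K.d n)) (fun n => by
    ext x
    exact K.dd n x)

lemma cpx_d (K : KRes A I r) (n : ℕ) : K.cpx.d (n + 1) n = ModuleCat.ofHom (K.d n) :=
  ChainComplex.of_d K.X (fun n => ModuleCat.ofHom (K.d n)) n

/-- The augmentation. -/
noncomputable def aug (K : KRes A I r) : K.X 0 →ₗ[A] (A ⧸ I) :=
  (Submodule.mkQ I) ∘ₗ K.e.toLinearMap

lemma aug_surj (K : KRes A I r) : Function.Surjective K.aug :=
  (Submodule.mkQ_surjective I).comp K.e.surjective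

lemma aug_eq_zero (K : KRes A I r) (x : K.X 0) : K.aug x = 0 ↔ ∃ y, K.d 0 y = x := by
  rw [← K.mem_iff]
  exact Submodule.Quotient.mk_eq_zero I

/-- The augmentation as chain map. -/
noncomputable def augHom (K : KRes A I r) :
    K.cpx ⟶ (ChainComplex.single₀ (ModuleCat.{u} A)).obj (ModuleCat.of A (A ⧸ I)) :=
  (ChainComplex.toSingle₀Equiv _ _).symm ⟨ModuleCat.ofHom K.aug, by
    rw [cpx_d]
    ext x
    exact (K.aug_eq_zero _).2 ⟨x, rfl⟩⟩

lemma augHom_f_zero (K : KRes A I r) : K.augHom.f 0 = ModuleCat.ofHom K.aug :=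
  ChainComplex.toSingle₀Equiv_symm_apply_f_zero _ _

/-- The projective resolution. -/
noncomputable def projRes (K : KRes A I r) : ProjectiveResolution (ModuleCat.of A (A ⧸ I)) where
  complex := K.cpx
  projective := fun n => by
    have : Projective (K.X n) := (IsProjective.iff_projective _).1 (Module.Projective.of_basis (K.b n))
    exact this
  π := K.augHom
  quasiIso := ⟨fun n => by
    cases n with
    | zero =>
      rw [ChainComplex.quasiIsoAt₀_iff, ShortComplex.quasiIso_iff_of_zeros']
      · refine (ShortComplex.exact_and_epi_g_iff_of_iso
          (S₂ := ShortComplex.mk (ModuleCat.ofHom (K.d 0)) (ModuleCat.ofHom K.aug) (by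
            ext x; exact (K.aug_eq_zero _).2 ⟨x, rfl⟩)) ?_).2 ⟨?_, ?_⟩
        · exact ShortComplex.isoMk (Iso.refl _) (Iso.refl _) (Iso.refl _)
            (by simp [cpx_d]; rfl) (by simp [augHom_f_zero]; rfl)
        · rw [ShortComplex.moduleCat_exact_iff]
          intro x hx
          exact (K.aug_eq_zero x).1 hx
        · exact (ModuleCat.epi_iff_surjective _).2 K.aug_surj
      all_goals rfl
    | succ n =>
      rw [quasiIsoAt_iff_exactAt']
      · rw [HomologicalComplex.exactAt_iff' _ (n + 2) (n + 1) n (by simp) (by simp),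
          ShortComplex.moduleCat_exact_iff]
        intro x hx
        have hx' : K.cpx.d (n + 1) n x = 0 := hx
        rw [cpx_d] at hx'
        obtain ⟨y, hy⟩ := K.ex n x hx'
        refine ⟨y, ?_⟩
        change K.cpx.d (n + 1 + 1) (n + 1) y = x
        rw [cpx_d]
        exact hy
      · apply ChainComplex.exactAt_succ_single_obj⟩

lemma lTensor_d (K : KRes A I r) (n : ℕ) : LinearMap.lTensor (A ⧸ I) (K.d n) = 0 := by
  have key : ∀ (m : A ⧸ I) (z : K.X n), z ∈ I • (⊤ : Submodule A (K.X n)) →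
      m ⊗ₜ[A] z = 0 := by
    intro m z hz
    refine Submodule.smul_induction_on hz ?_ ?_
    · intro a ha y _
      rw [← TensorProduct.smul_tmul]
      have : a • m = 0 := by
        obtain ⟨m, rfl⟩ := Ideal.Quotient.mk_surjective m
        rw [Algebra.smul_def, Ideal.Quotient.algebraMap_eq, Ideal.Quotient.eq_zero_iff_mem.2 ha,
          zero_mul]
      rw [this, TensorProduct.zero_tmul]
    · intro x y hx hy
      rw [TensorProduct.tmul_add, hx, hy, add_zero]
  ext m x
  exact key _ _ (K.min n x)

lemma tensor_d (K : KRes A I r) (i j : ℕ) :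
    ((((MonoidalCategory.tensoringLeft (ModuleCat.{u} A)).obj
      (ModuleCat.of A (A ⧸ I))).mapHomologicalComplex _).obj K.cpx).d i j = 0 := by
  by_cases h : i = j + 1
  · subst h
    change MonoidalCategory.whiskerLeft (ModuleCat.of A (A ⧸ I)) (K.cpx.d (j + 1) j) = 0
    rw [cpx_d]
    ext : 1
    exact K.lTensor_d j
  · exact HomologicalComplex.shape _ _ _ (fun h' => h h'.symm)

/-- Tor computed. -/
lemma tor_equiv (K : KRes A I r) (n : ℕ) :
    Nonempty (((((Tor (ModuleCat.{u} A) n).obj (ModuleCat.of A (A ⧸ I))).obj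
          (ModuleCat.of A (A ⧸ I))) : Type u) ≃ₗ[A] (Fin (r.choose n) → A ⧸ I)) := by
  let F := (MonoidalCategory.tensoringLeft (ModuleCat.{u} A)).obj (ModuleCat.of A (A ⧸ I))
  let C := (F.mapHomologicalComplex (ComplexShape.down ℕ)).obj K.cpx
  let i1 : ((Tor (ModuleCat.{u} A) n).obj (ModuleCat.of A (A ⧸ I))).obj
          (ModuleCat.of A (A ⧸ I)) ≅ C.homology n := K.projRes.isoLeftDerivedObj F n
  let i2 : C.homology n ≅ C.X n :=
    (ShortComplex.HomologyData.ofZeros (C.sc n) (K.tensor_d _ _) (K.tensor_d _ _)).left.homologyIso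
  let e3 : (C.X n : Type u) ≃ₗ[A] TensorProduct A (A ⧸ I) (K.X n) := LinearEquiv.refl _ _
  let e4 : TensorProduct A (A ⧸ I) (K.X n) ≃ₗ[A] TensorProduct A (A ⧸ I) (Fin (r.choose n) → A) :=
    LinearEquiv.lTensor _ (K.b n).equivFun
  let e5 : TensorProduct A (A ⧸ I) (Fin (r.choose n) → A) ≃ₗ[A] (Fin (r.choose n) → A ⧸ I) :=
    TensorProduct.piScalarRight A A (A ⧸ I) (Fin (r.choose n))
  exact ⟨(i1 ≪≫ i2).toLinearEquiv ≪≫ₗ e3 ≪≫ₗ e4 ≪≫ₗ e5⟩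

/-! ### The conormal module -/

lemma coord_mem (K : KRes A I r) (n : ℕ) (x : K.X n) (hx : x ∈ I • (⊤ : Submodule A (K.X n)))
    (i : Fin (r.choose n)) : (K.b n).repr x i ∈ I := by
  refine Submodule.smul_induction_on hx ?_ ?_
  · intro a ha y _
    rw [map_smul, Finsupp.smul_apply, smul_eq_mul]
    exact Ideal.mul_mem_right _ _ ha
  · intro x y hx hy
    rw [map_add, Finsupp.add_apply]
    exact Submodule.add_mem _ hx hy

/-- `X₁ → I`. -/
noncomputable def toI (K : KRes A I r) : K.X 1 →ₗ[A] I :=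
  (K.e.toLinearMap ∘ₗ K.d 0).codRestrict I (fun x => (K.mem_iff _).2 ⟨x, rfl⟩)

lemma toI_surj (K : KRes A I r) : Function.Surjective K.toI := by
  rintro ⟨a, ha⟩
  obtain ⟨y, hy⟩ := (K.mem_iff (K.e.symm a)).1 (by simpa using ha)
  refine ⟨y, Subtype.ext ?_⟩
  change K.e (K.d 0 y) = a
  rw [hy, LinearEquiv.apply_symm_apply]

lemma mem_of_toI (K : KRes A I r) (x : K.X 1) (hx : I.toCotangent (K.toI x) = 0) :
    x ∈ I • (⊤ : Submodule A (K.X 1)) := by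
  have h1 : K.toI x ∈ I • (⊤ : Submodule A I) := by
    exact (Submodule.Quotient.mk_eq_zero _).1 hx
  rw [← LinearMap.range_eq_top.2 K.toI_surj, LinearMap.range_eq_map, ← Submodule.map_smul''] at h1
  obtain ⟨y, hy, hxy⟩ := h1
  have h2 : K.d 0 (x - y) = 0 := by
    apply K.e.injective
    have := congrArg Subtype.val hxy
    change K.e (K.d 0 y) = K.e (K.d 0 x) at this
    rw [map_sub, map_sub, this, sub_self, map_zero]
  obtain ⟨z, hz⟩ := K.ex 0 _ h2
  have := Submodule.add_mem _ (K.min 1 z) hy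
  rwa [hz, sub_add_cancel] at this

/-- Basis of the conormal module. -/
noncomputable def cotBasis (K : KRes A I r) :
    Module.Basis (Fin (r.choose 1)) (A ⧸ I) I.Cotangent :=
  Module.Basis.mk (v := fun i => I.toCotangent (K.toI (K.b 1 i)))
    (by
      rw [Fintype.linearIndependent_iff]
      intro g hg i
      choose a ha using fun i => Ideal.Quotient.mk_surjective (g i)
      have h1 : I.toCotangent (K.toI (∑ i, a i • K.b 1 i)) = 0 := by
        rw [map_sum, map_sum, ← hg]
        refine Finset.sum_congr rfl fun i _ => ?_
        rw [map_smul, map_smul, ← ha i]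
        rfl
      have h2 := K.coord_mem 1 _ (K.mem_of_toI _ h1) i
      rw [Module.Basis.repr_sum_self] at h2
      rw [← ha i]
      exact Ideal.Quotient.eq_zero_iff_mem.2 h2)
    (by
      rintro x -
      obtain ⟨y, rfl⟩ := I.toCotangent_surjective x
      obtain ⟨z, rfl⟩ := K.toI_surj y
      rw [← (K.b 1).sum_repr z, map_sum, map_sum]
      refine Submodule.sum_mem _ fun i _ => ?_
      rw [map_smul, map_smul]
      have := Submodule.smul_mem (Submodule.span (A ⧸ I)
        (Set.range fun i => I.toCotangent (K.toI (K.b 1 i))))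
        (Ideal.Quotient.mk I ((K.b 1).repr z i)) (Submodule.subset_span ⟨i, rfl⟩)
      exact this)

lemma ext_equiv (K : KRes A I r) (n : ℕ) :
    Nonempty (RestrictScalars A (A ⧸ I) (⋀[A ⧸ I]^n I.Cotangent) ≃ₗ[A]
      (Fin (r.choose n) → A ⧸ I)) := by
  let B := K.cotBasis.exteriorPower n
  have hc : Nat.card (Set.powersetCard (Fin (r.choose 1)) n) = r.choose n := by
    rw [Set.powersetCard.card]; simp
  let B' := B.reindex (Finite.equivFinOfCardEq hc)
  refine ⟨{ toFun := fun x => B'.equivFun x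
            invFun := fun x => B'.equivFun.symm x
            left_inv := B'.equivFun.left_inv
            right_inv := B'.equivFun.right_inv
            map_add' := B'.equivFun.map_add
            map_smul' := fun a x => ?_ }⟩
  refine (B'.equivFun.map_smul (Ideal.Quotient.mk I a) x).trans ?_
  rfl

end KRes

end Tor

/-- Let `A` be a commutative ring and `f₁, …, f_r ∈ A` a regular sequence
generating the ideal `I = (f₁, …, f_r)`. Then for every `n ≥ 0` there is an isomorphism of
`A/I`-modules `Tor_n^A(A/I, A/I) ≅ ⋀ⁿ_{A/I}(I/I²)` (stated here as an `A`-linear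
equivalence onto the `n`-th exterior power of the conormal module `I/I²` over `A/I`, viewed
as an `A`-module by restriction of scalars; such an equivalence is automatically
`A/I`-linear since `A` acts through `A/I` on both sides). In particular
`Tor_n^A(A/I, A/I) = 0` for `n > r`. -/
theorem statement8 (A : Type u) [CommRing A] (rs : List A)
    (hreg : RingTheory.Sequence.IsRegular A rs) (I : Ideal A) (hI : I = Ideal.ofList rs) :
    (∀ n : ℕ,
      Nonempty (((((Tor (ModuleCat.{u} A) n).obj (ModuleCat.of A (A ⧸ I))).obj
          (ModuleCat.of A (A ⧸ I))) : Type u) ≃ₗ[A]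
        RestrictScalars A (A ⧸ I) (⋀[A ⧸ I]^n I.Cotangent))) ∧
    (∀ n : ℕ, rs.length < n →
      Subsingleton ((((Tor (ModuleCat.{u} A) n).obj (ModuleCat.of A (A ⧸ I))).obj
        (ModuleCat.of A (A ⧸ I))) : Type u)) := by
  subst hI
  obtain ⟨K⟩ := KRes.exists_of_regular rs hreg.toIsWeaklyRegular
  refine ⟨fun n => ?_, fun n hn => ?_⟩
  · obtain ⟨e1⟩ := K.tor_equiv n
    obtain ⟨e2⟩ := K.ext_equiv n
    exact ⟨e1 ≪≫ₗ e2.symm⟩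
  · obtain ⟨e1⟩ := K.tor_equiv n
    have : IsEmpty (Fin (rs.length.choose n)) := by
      rw [Nat.choose_eq_zero_of_lt hn]; infer_instance
    exact e1.toEquiv.subsingleton
end

section
/- Let k be a commutative ring, A a formally smooth commutative k-algebra, and k[ε] = k[x]/(x²) the ring of dual numbers over k. Let B be a commutative k[ε]-algebra which is flat as a k[ε]-module and which is equipped with an isomorphism of k-algebras B/εB ≅ A. Then there exists an isomorphism of k[ε]-algebras B ≅ A ⊗_k k[ε] compatible with the given identification modulo ε. In other words, a formally smooth affine algebra is rigid: it admits no nontrivial first-order deformations. -/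
open scoped TensorProduct

universe u

/-- The `k`-algebra map `A ⊗[k] k[ε] → A` sending `ε` to `0` (reduction modulo `ε` of the
trivial first-order deformation of `A`). -/
noncomputable def reduceEps (k : Type u) [CommRing k] (A : Type u) [CommRing A]
    [Algebra k A] : A ⊗[k] DualNumber k →ₐ[k] A :=
  (Algebra.TensorProduct.rid k k A).toAlgHom.comp
    (Algebra.TensorProduct.map (AlgHom.id k A) (TrivSqZeroExt.fstHom k k k))

attribute [local instance] Algebra.TensorProduct.rightAlgebra

theorem mem_span_of_eps_mul (k : Type u) [CommRing k] (B : Type u) [CommRing B]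
    [Algebra (DualNumber k) B] [Module.Flat (DualNumber k) B] (b : B)
    (hb : algebraMap (DualNumber k) B DualNumber.eps * b = 0) :
    b ∈ Ideal.span {algebraMap (DualNumber k) B DualNumber.eps} := by
  have h := Module.Flat.isTrivialRelation_of_sum_smul_eq_zero (R := DualNumber k) (M := B)
    (ι := Unit) (f := fun _ => DualNumber.eps) (x := fun _ => b)
    (by simpa [Algebra.smul_def] using hb)
  obtain ⟨κ, a, y, h1, h2⟩ := h
  have h1b : b = ∑ j, a () j • y j := h1 ()
  rw [h1b]
  refine Ideal.sum_mem _ fun j _ => ?_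
  have h3 : DualNumber.eps * a () j = 0 := by simpa using h2 j
  have h4 : (a () j).fst = 0 := by
    have := congrArg TrivSqZeroExt.snd h3
    simpa using this
  have h5 : a () j = DualNumber.eps * TrivSqZeroExt.inl (a () j).snd := by
    ext <;> simp [h4]
  rw [h5, Algebra.smul_def, map_mul, mul_assoc]
  exact Ideal.mul_mem_right _ _ (Ideal.mem_span_singleton_self _)

theorem exists_tmul_eps (k : Type u) [CommRing k] (A : Type u) [CommRing A]
    [Algebra k A] (x : A ⊗[k] DualNumber k) :
    ∃ a b : A, x = a ⊗ₜ[k] (1 : DualNumber k) + b ⊗ₜ[k] (DualNumber.eps : DualNumber k) := by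
  induction x using TensorProduct.induction_on with
  | zero => exact ⟨0, 0, by simp⟩
  | tmul a d =>
    refine ⟨d.fst • a, d.snd • a, ?_⟩
    rw [TensorProduct.smul_tmul, TensorProduct.smul_tmul, ← TensorProduct.tmul_add]
    congr 1
    ext <;> simp
  | add x y hx hy =>
    obtain ⟨a, b, rfl⟩ := hx
    obtain ⟨c, d, rfl⟩ := hy
    exact ⟨a + c, b + d, by simp only [TensorProduct.add_tmul]; abel⟩

/-- Let `k` be a commutative ring, `A` a formally smooth commutative
`k`-algebra, and `k[ε]` the dual numbers. Let `B` be a commutative `k[ε]`-algebra, flat as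
a `k[ε]`-module, equipped with an isomorphism of `k`-algebras `B/εB ≅ A`. Then there is an
isomorphism of `k[ε]`-algebras `B ≅ A ⊗_k k[ε]` compatible with the given identification
modulo `ε`: a formally smooth affine algebra is rigid. -/
theorem statement11 (k : Type u) [CommRing k] (A : Type u) [CommRing A] [Algebra k A]
    [Algebra.FormallySmooth k A]
    (B : Type u) [CommRing B] [Algebra (DualNumber k) B] [Algebra k B]
    [IsScalarTower k (DualNumber k) B] [Module.Flat (DualNumber k) B]
    (e : (B ⧸ Ideal.span {algebraMap (DualNumber k) B DualNumber.eps}) ≃ₐ[k] A) :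
    ∃ φ : B ≃ₐ[DualNumber k] A ⊗[k] DualNumber k,
      ∀ b : B, reduceEps k A (φ b) =
        e (Ideal.Quotient.mk (Ideal.span {algebraMap (DualNumber k) B DualNumber.eps}) b) := by
  let E : B := algebraMap (DualNumber k) B DualNumber.eps
  have hE : E = algebraMap (DualNumber k) B DualNumber.eps := rfl
  let I : Ideal B := Ideal.span {E}
  have hI : I = Ideal.span {E} := rfl
  change (B ⧸ I) ≃ₐ[k] A at e
  have hEE : E * E = 0 := by rw [hE, ← map_mul, DualNumber.eps_mul_eps, map_zero]
  have hI2 : I ^ 2 = ⊥ := by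
    rw [hI, Ideal.span_singleton_pow, pow_two, hEE]; simp
  obtain ⟨σ, hσ⟩ := Algebra.FormallySmooth.comp_surjective k A I hI2 e.symm.toAlgHom
  have hσ' : ∀ a, e (Ideal.Quotient.mk I (σ a)) = a := fun a => by
    have h : Ideal.Quotient.mk I (σ a) = e.symm a := AlgHom.congr_fun hσ a
    rw [h, e.apply_symm_apply]
  have hEmk : Ideal.Quotient.mk I E = 0 :=
    Ideal.Quotient.eq_zero_iff_mem.mpr (Ideal.mem_span_singleton_self _)
  let ψ₀ : A ⊗[k] DualNumber k →ₐ[k] B :=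
    Algebra.TensorProduct.lift σ (IsScalarTower.toAlgHom k (DualNumber k) B)
      (fun _ _ => Commute.all _ _)
  have hψ₀ : ∀ a d, ψ₀ (a ⊗ₜ d) = σ a * algebraMap (DualNumber k) B d := fun a d => by
    simp [ψ₀]
  let ψ : A ⊗[k] DualNumber k →ₐ[DualNumber k] B :=
    { ψ₀.toRingHom with
      commutes' := fun d => by
        change ψ₀ (1 ⊗ₜ d) = _
        rw [hψ₀, map_one, one_mul] }
  have hψ : ∀ a b : A, ψ (a ⊗ₜ 1 + b ⊗ₜ DualNumber.eps) = σ a + E * σ b := fun a b => by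
    change ψ₀ _ = _
    rw [map_add, hψ₀, hψ₀, map_one, mul_one, mul_comm E]
  have hred : ∀ x, reduceEps k A x = e (Ideal.Quotient.mk I (ψ x)) := fun x => by
    obtain ⟨a, b, rfl⟩ := exists_tmul_eps k A x
    rw [hψ, map_add (Ideal.Quotient.mk I), map_mul, hEmk, zero_mul, add_zero, hσ']
    simp [reduceEps]
  have key : ∀ b : B, ∃ c, b = σ (e (Ideal.Quotient.mk I b)) + E * c := fun b => by
    have : b - σ (e (Ideal.Quotient.mk I b)) ∈ I := by
      rw [← Ideal.Quotient.eq_zero_iff_mem, map_sub, sub_eq_zero]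
      apply e.injective
      rw [hσ']
    obtain ⟨c, hc⟩ := Ideal.mem_span_singleton'.mp this
    exact ⟨c, by rw [mul_comm, hc]; ring⟩
  have hbij : Function.Bijective ψ := by
    constructor
    · rw [injective_iff_map_eq_zero]
      intro x hx
      obtain ⟨a, b, rfl⟩ := exists_tmul_eps k A x
      rw [hψ] at hx
      have ha : a = 0 := by
        have := congrArg (fun y => e (Ideal.Quotient.mk I y)) hx
        simpa only [map_add, map_mul, hEmk, zero_mul, add_zero, hσ', map_zero] using this
      subst ha
      rw [map_zero, zero_add] at hx
      have hb : b = 0 := by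
        rw [← hσ' b, Ideal.Quotient.eq_zero_iff_mem.mpr (mem_span_of_eps_mul k B _ hx), map_zero]
      subst hb
      simp
    · intro b
      obtain ⟨c, hc⟩ := key b
      obtain ⟨d, hd⟩ := key c
      refine ⟨e (Ideal.Quotient.mk I b) ⊗ₜ 1 + e (Ideal.Quotient.mk I c) ⊗ₜ DualNumber.eps, ?_⟩
      rw [hψ]
      have : E * c = E * σ (e (Ideal.Quotient.mk I c)) := by
        conv_lhs => rw [hd]
        rw [mul_add, ← mul_assoc, hEE, zero_mul, add_zero]
      rw [← this, ← hc]
  refine ⟨(AlgEquiv.ofBijective ψ hbij).symm, fun b => ?_⟩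
  rw [hred]
  exact congrArg (fun y => e (Ideal.Quotient.mk I y))
    ((AlgEquiv.ofBijective ψ hbij).apply_symm_apply b)
end
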